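/- arXiv:2406.10608 — 4 statements merged into one kernel-verified Lean document; each statement's English description precedes it below -/
import Mathlib

section
/- Let (I, vtx, w) be a weighted k-instance family on a finite vertex set V, and let W* ⊆ V be optimal. Then every vertex v ∈ W* satisfies deg_{W*}(v) ≥ τ(W*)/|W*|. -/
/-! Deleting `v` from `W*` removes exactly the instances through `v`, so
`τ(W* \ {v}) = τ(W*) - deg_{W*}(v)` (`tauW_erase_add_degW`). If `W* \ {v}` is nonempty, optimality
gives `(τ(W*) - deg_{W*}(v)) / (|W*| - 1) ≤ τ(W*) / |W*|`, which rearranges to the claim.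
If `W* = {v}`, then `τ(∅) = 0` because every instance has `k > 0` vertices, and the claim
holds with equality. -/


open Finset MeasureTheory

open scoped Classical

variable {α ι : Type*} [DecidableEq α]

noncomputable def tauW (I : Finset ι) (vtx : ι → Finset α) (w : ι → ℝ) (W : Finset α) : ℝ :=
  ∑ i ∈ I.filter (fun i => vtx i ⊆ W), w i

noncomputable def degW (I : Finset ι) (vtx : ι → Finset α) (w : ι → ℝ) (W : Finset α)
    (v : α) : ℝ :=
  ∑ i ∈ I.filter (fun i => vtx i ⊆ W ∧ v ∈ vtx i), w i

noncomputable def rhoW (I : Finset ι) (vtx : ι → Finset α) (w : ι → ℝ) (W : Finset α) : ℝ :=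
  tauW I vtx w W / (W.card : ℝ)

def OptimalTMDS (I : Finset ι) (vtx : ι → Finset α) (w : ι → ℝ) (V Wstar : Finset α) : Prop :=
  Wstar ⊆ V ∧ Wstar.Nonempty ∧
    ∀ W ⊆ V, W.Nonempty → rhoW I vtx w W ≤ rhoW I vtx w Wstar

noncomputable def batchL (k : ℕ) (ξ : ℝ) (I : Finset ι) (vtx : ι → Finset α) (w : ι → ℝ)
    (W : Finset α) : Finset α :=
  W.filter (fun v => degW I vtx w W v ≤ (k : ℝ) * (1 + ξ) * tauW I vtx w W / (W.card : ℝ))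

theorem tauW_erase_add_degW (I : Finset ι) (vtx : ι → Finset α) (w : ι → ℝ) (W : Finset α)
    (v : α) : tauW I vtx w (W.erase v) + degW I vtx w W v = tauW I vtx w W := by
  unfold tauW degW
  simp only [Finset.sum_filter, ← Finset.sum_add_distrib]
  refine Finset.sum_congr rfl fun i _ => ?_
  by_cases h1 : vtx i ⊆ W <;> by_cases h2 : v ∈ vtx i <;> simp [Finset.subset_erase, h1, h2]

/-- If `W*` is optimal then every vertex `v ∈ W*` satisfies
`deg_{W*}(v) ≥ τ(W*)/|W*|`. -/
theorem stmt2
    (k : ℕ) (hk : 2 ≤ k)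
    (V : Finset α) (I : Finset ι) (vtx : ι → Finset α) (w : ι → ℝ)
    (hvtx : ∀ i ∈ I, vtx i ⊆ V) (hcard : ∀ i ∈ I, (vtx i).card = k)
    (hw : ∀ i ∈ I, 0 ≤ w i)
    (Wstar : Finset α) (hopt : OptimalTMDS I vtx w V Wstar)
    (v : α) (hv : v ∈ Wstar) :
    tauW I vtx w Wstar / (Wstar.card : ℝ) ≤ degW I vtx w Wstar v := by
  obtain ⟨hWV, -, hmax⟩ := hopt
  have hsplit := tauW_erase_add_degW I vtx w Wstar v
  have hn : (((Wstar.erase v).card : ℕ) : ℝ) + 1 = (Wstar.card : ℝ) := by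
    exact_mod_cast Finset.card_erase_add_one hv
  have hpos : (0 : ℝ) < Wstar.card := by
    exact_mod_cast Finset.card_pos.mpr ⟨v, hv⟩
  rw [div_le_iff₀ hpos]
  rcases (Wstar.erase v).eq_empty_or_nonempty with he | hne
  · have hzero : tauW I vtx w (Wstar.erase v) = 0 := by
      rw [he]
      unfold tauW
      refine Finset.sum_eq_zero fun i hi => ?_
      obtain ⟨hiI, hsub⟩ := Finset.mem_filter.mp hi
      have hc := hcard i hiI
      rw [Finset.subset_empty.mp hsub, Finset.card_empty] at hc
      omega
    rw [he, Finset.card_empty, Nat.cast_zero, zero_add] at hn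
    rw [← hn]
    linarith
  · have hle := hmax _ ((Finset.erase_subset v Wstar).trans hWV) hne
    have hpos' : (0 : ℝ) < (Wstar.erase v).card := by
      exact_mod_cast Finset.card_pos.mpr hne
    unfold rhoW at hle
    rw [div_le_div_iff₀ hpos' hpos, ← hsplit, ← hn] at hle
    rw [← hsplit, ← hn]
    linarith
end

section
/- Let (I, vtx, w) be a weighted k-instance family on a finite vertex set V, let W* ⊆ V be optimal, and let W be a subset of V with W* ⊆ W. If v ∈ W* satisfies deg_W(v) ≤ deg_W(u) for every u ∈ W (i.e., v has minimum degree in W), then ρ(W) ≥ (1/k) · ρ(W*). -/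
/-!
Deleting `v` from the optimal set `W*` cannot increase the density, which forces
`ρ(W*) ≤ deg_{W*}(v)` (`rhoW_le_degW`). Degrees grow with the vertex set (`degW_mono`), so
`ρ(W*) ≤ deg_W(v)`, and by minimality of `v` every vertex of `W` has degree at least `ρ(W*)` in
`W`. Summing over `W` and using the handshake identity `∑_{u ∈ W} deg_W(u) = k τ(W)` (`sum_degW`)
gives `|W| ρ(W*) ≤ k τ(W)`.
-/

open Finset MeasureTheory

open scoped Classical

variable {α ι : Type*} [DecidableEq α]

/-- An instance inside `W` either contains `v`, and is counted by the degree of `v`, or lies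
inside `W \ {v}`. -/
theorem tauW_eq_degW_add (I : Finset ι) (vtx : ι → Finset α) (w : ι → ℝ) (W : Finset α) (v : α) :
    tauW I vtx w W = degW I vtx w W v + tauW I vtx w (W.erase v) := by
  unfold tauW degW
  rw [← Finset.sum_filter_add_sum_filter_not (I.filter (fun i => vtx i ⊆ W))
    (fun i => v ∈ vtx i), Finset.filter_filter, Finset.filter_filter]
  congr 2
  ext i
  simp only [Finset.mem_filter, Finset.subset_erase]

/-- Handshake identity: each instance inside `W` is counted once for each of its `k` vertices. -/
theorem sum_degW (k : ℕ) (I : Finset ι) (vtx : ι → Finset α) (w : ι → ℝ)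
    (hcard : ∀ i ∈ I, (vtx i).card = k) (W : Finset α) :
    ∑ u ∈ W, degW I vtx w W u = (k : ℝ) * tauW I vtx w W := by
  unfold tauW degW
  simp only [← Finset.filter_filter]
  simp_rw [Finset.sum_filter (fun i => _ ∈ vtx i)]
  rw [Finset.sum_comm, Finset.mul_sum]
  refine Finset.sum_congr rfl fun i hi => ?_
  obtain ⟨hI, hs⟩ := Finset.mem_filter.mp hi
  rw [← Finset.sum_filter, Finset.sum_const, nsmul_eq_mul, Finset.filter_mem_eq_inter,
    Finset.inter_eq_right.mpr hs, hcard i hI]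

theorem degW_mono (I : Finset ι) (vtx : ι → Finset α) (w : ι → ℝ) (hw : ∀ i ∈ I, 0 ≤ w i)
    {W W' : Finset α} (h : W ⊆ W') (v : α) : degW I vtx w W v ≤ degW I vtx w W' v := by
  unfold degW
  refine Finset.sum_le_sum_of_subset_of_nonneg ?_ fun i hi _ => hw i (Finset.mem_filter.mp hi).1
  intro i hi
  simp only [Finset.mem_filter] at hi ⊢
  exact ⟨hi.1, hi.2.1.trans h, hi.2.2⟩

/-- In an optimal set every vertex has degree at least the density, since deleting a vertex of
smaller degree would increase the density. -/
theorem rhoW_le_degW (k : ℕ) (hk : 2 ≤ k) (V : Finset α) (I : Finset ι) (vtx : ι → Finset α)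
    (w : ι → ℝ) (hcard : ∀ i ∈ I, (vtx i).card = k)
    (S : Finset α) (hopt : OptimalTMDS I vtx w V S) (v : α) (hv : v ∈ S) :
    rhoW I vtx w S ≤ degW I vtx w S v := by
  obtain ⟨hSV, hne, hmax⟩ := hopt
  have hpos : (0 : ℝ) < S.card := by exact_mod_cast hne.card_pos
  have hτ : tauW I vtx w S = rhoW I vtx w S * S.card := by
    unfold rhoW
    field_simp
  have hc : ((S.erase v).card : ℝ) + 1 = S.card := by
    exact_mod_cast Finset.card_erase_add_one hv
  have hle : tauW I vtx w (S.erase v) ≤ rhoW I vtx w S * (S.erase v).card := by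
    rcases (S.erase v).eq_empty_or_nonempty with h | h
    · -- Optimality says nothing about the empty set, but no instance lies in it, as `k > 0`.
      rw [h, tauW, Finset.filter_eq_empty_iff.mpr]
      · simp
      · intro i hi hs
        have := hcard i hi
        rw [Finset.subset_empty.mp hs, Finset.card_empty] at this
        omega
    · have hp : (0 : ℝ) < (S.erase v).card := by exact_mod_cast h.card_pos
      exact (div_le_iff₀ hp).mp (hmax _ ((Finset.erase_subset v S).trans hSV) h)
  have hsplit := tauW_eq_degW_add I vtx w S v
  rw [hτ, ← hc] at hsplit
  linarith

/-- If `W*` is optimal, `W* ⊆ W ⊆ V`, and `v ∈ W*` has minimum degree in `W`,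
then `ρ(W) ≥ (1/k)·ρ(W*)`. -/
theorem stmt3
    (k : ℕ) (hk : 2 ≤ k)
    (V : Finset α) (I : Finset ι) (vtx : ι → Finset α) (w : ι → ℝ)
    (hvtx : ∀ i ∈ I, vtx i ⊆ V) (hcard : ∀ i ∈ I, (vtx i).card = k)
    (hw : ∀ i ∈ I, 0 ≤ w i)
    (Wstar : Finset α) (hopt : OptimalTMDS I vtx w V Wstar)
    (W : Finset α) (hWV : W ⊆ V) (hsub : Wstar ⊆ W)
    (v : α) (hv : v ∈ Wstar)
    (hmin : ∀ u ∈ W, degW I vtx w W v ≤ degW I vtx w W u) :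
    (1 / (k : ℝ)) * rhoW I vtx w Wstar ≤ rhoW I vtx w W := by
  have hdeg : rhoW I vtx w Wstar ≤ degW I vtx w W v :=
    (rhoW_le_degW k hk V I vtx w hcard Wstar hopt v hv).trans (degW_mono I vtx w hw hsub v)
  have hWpos : (0 : ℝ) < W.card := by exact_mod_cast Finset.card_pos.mpr ⟨v, hsub hv⟩
  have hkpos : (0 : ℝ) < k := by exact_mod_cast (by omega : 0 < k)
  have hsum : (W.card : ℝ) * rhoW I vtx w Wstar ≤ k * tauW I vtx w W := by
    rw [← sum_degW k I vtx w hcard W, ← nsmul_eq_mul]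
    exact Finset.card_nsmul_le_sum _ _ _ fun u hu => hdeg.trans (hmin u hu)
  rw [rhoW.eq_def I vtx w W, le_div_iff₀ hWpos, one_div_mul_eq_div, div_mul_eq_mul_div,
    div_le_iff₀ hkpos]
  linarith
end

section
/- Let (I, vtx, w) be a weighted k-instance family on a finite vertex set V, let ξ > 0, and let W ⊆ V be nonempty with τ(W) > 0. Then |W ∖ L(W)| ≤ |W|/(1+ξ); equivalently, |L(W)| ≥ ξ|W|/(1+ξ). -/
/-! The bound is Markov's inequality for the degrees. By double counting (`sum_degW_eq`) the degrees
of the vertices of `W` sum to `k · τ(W)`, so their average is `k · τ(W) / |W|`. A vertex outside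
`L(W)` has degree more than `1 + ξ` times this average; degrees being nonnegative and the average
positive, at most `|W| / (1 + ξ)` vertices can do so. The lower bound on `|L(W)|` follows by taking
complements in `W`. -/

open Finset MeasureTheory

open scoped Classical

variable {α ι : Type*} [DecidableEq α]

/-- Double counting: an instance contained in `W` contributes its weight to the degree of each of
its `k` vertices, so the degrees in `W` sum to `k` times the total weight. -/
theorem sum_degW_eq (k : ℕ) (I : Finset ι) (vtx : ι → Finset α) (w : ι → ℝ)
    (hcard : ∀ i ∈ I, (vtx i).card = k) (W : Finset α) :
    ∑ v ∈ W, degW I vtx w W v = (k : ℝ) * tauW I vtx w W := by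
  have hdeg : ∀ v ∈ W, degW I vtx w W v =
      ∑ i ∈ I.filter (fun i => vtx i ⊆ W), if v ∈ vtx i then w i else 0 := by
    intro v _
    rw [degW, ← Finset.sum_filter, Finset.filter_filter]
  rw [Finset.sum_congr rfl hdeg, Finset.sum_comm, tauW, Finset.mul_sum]
  refine Finset.sum_congr rfl fun i hi => ?_
  obtain ⟨hiI, hiW⟩ := Finset.mem_filter.mp hi
  rw [← Finset.sum_filter, Finset.sum_const, nsmul_eq_mul, Finset.filter_mem_eq_inter,
    Finset.inter_eq_right.mpr hiW, hcard i hiI]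

/-- For `ξ > 0` and nonempty `W ⊆ V` with `τ(W) > 0`,
`|W ∖ L(W)| ≤ |W|/(1+ξ)` (equivalently `|L(W)| ≥ ξ|W|/(1+ξ)`). -/
theorem stmt8
    (k : ℕ) (hk : 2 ≤ k)
    (V : Finset α) (I : Finset ι) (vtx : ι → Finset α) (w : ι → ℝ)
    (hvtx : ∀ i ∈ I, vtx i ⊆ V) (hcard : ∀ i ∈ I, (vtx i).card = k)
    (hw : ∀ i ∈ I, 0 ≤ w i)
    (ξ : ℝ) (hξ : 0 < ξ)
    (W : Finset α) (hWV : W ⊆ V) (hWne : W.Nonempty)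
    (htau : 0 < tauW I vtx w W) :
    ((W \ batchL k ξ I vtx w W).card : ℝ) ≤ (W.card : ℝ) / (1 + ξ) ∧
      ξ * (W.card : ℝ) / (1 + ξ) ≤ ((batchL k ξ I vtx w W).card : ℝ) := by
  have hn : (0 : ℝ) < W.card := by exact_mod_cast hWne.card_pos
  have hk0 : (0 : ℝ) < k := by exact_mod_cast (by omega : 0 < k)
  have hξ1 : 0 < 1 + ξ := by linarith
  have hkτ : 0 < (k : ℝ) * tauW I vtx w W := mul_pos hk0 htau
  have hsub : batchL k ξ I vtx w W ⊆ W := Finset.filter_subset _ _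
  have hnonneg : ∀ v, 0 ≤ degW I vtx w W v := fun v =>
    Finset.sum_nonneg fun i hi => hw i (Finset.mem_filter.mp hi).1
  have hmarkov : ((W \ batchL k ξ I vtx w W).card : ℝ) *
      ((k : ℝ) * (1 + ξ) * tauW I vtx w W / W.card) ≤ (k : ℝ) * tauW I vtx w W := by
    rw [← sum_degW_eq k I vtx w hcard W, ← nsmul_eq_mul]
    refine (Finset.card_nsmul_le_sum _ (degW I vtx w W) _ fun v hv => ?_).trans
      (Finset.sum_le_sum_of_subset_of_nonneg Finset.sdiff_subset fun v _ _ => hnonneg v)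
    obtain ⟨hvW, hvL⟩ := Finset.mem_sdiff.mp hv
    by_contra hlt
    exact hvL (Finset.mem_filter.mpr ⟨hvW, (not_le.mp hlt).le⟩)
  have hfirst : ((W \ batchL k ξ I vtx w W).card : ℝ) ≤ (W.card : ℝ) / (1 + ξ) := by
    rw [mul_div_assoc', div_le_iff₀ hn] at hmarkov
    rw [le_div_iff₀ hξ1]
    refine le_of_mul_le_mul_left ?_ hkτ
    linarith
  refine ⟨hfirst, ?_⟩
  have hcompl : ((W \ batchL k ξ I vtx w W).card : ℝ) + (batchL k ξ I vtx w W).card = W.card := by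
    exact_mod_cast Finset.card_sdiff_add_card_eq_card hsub
  have hsplit : ξ * (W.card : ℝ) / (1 + ξ) = W.card - (W.card : ℝ) / (1 + ξ) := by
    field_simp
    ring
  linarith
end

section
/- (Correctness of the min-cut characterization of the optimal density.) Let (I, vtx, w) be a weighted k-instance family on a nonempty finite vertex set V, let ζ ≥ 0, and define the cut cost c(W) = ∑_{i ∈ I : ¬(vtx i ⊆ W)} w i + ζ·|W| for every W ⊆ V (so c(∅) = τ(V)). Let ρ* = max{ρ(W) : W ⊆ V, W nonempty}. If some nonempty W' ⊆ V minimizes c over all subsets of V, then ζ ≤ ρ(W') ≤ ρ*; and if the empty set minimizes c over all subsets of V, then ζ ≥ ρ*. -/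
/-! Splitting the total weight `∑ w` into the instances inside `W` and the others gives
`c(W) = ∑ w - τ(W) + ζ|W|`. As every instance has `k ≥ 2` vertices, `τ(∅) = 0`, so comparing `c(W)`
with `c(∅)` is the same as comparing `τ(W)` with `ζ|W|`, i.e. `ρ(W)` with `ζ` for nonempty `W`. -/

open Finset MeasureTheory

open scoped Classical

variable {α ι : Type*} [DecidableEq α]

/-- The weight of the instances cut by `W` and the weight `τ(W)` add up to the total weight. -/
lemma cut_add_tauW (I : Finset ι) (vtx : ι → Finset α) (w : ι → ℝ) (W : Finset α) :
    (∑ i ∈ I.filter (fun i => ¬ vtx i ⊆ W), w i) + tauW I vtx w W = ∑ i ∈ I, w i := by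
  rw [add_comm]
  exact Finset.sum_filter_add_sum_filter_not I (fun i => vtx i ⊆ W) w

lemma tauW_empty (I : Finset ι) (vtx : ι → Finset α) (w : ι → ℝ)
    (h : ∀ i ∈ I, (vtx i).Nonempty) : tauW I vtx w ∅ = 0 := by
  unfold tauW
  rw [Finset.filter_eq_empty_iff.2 fun i hi hs => (h i hi).ne_empty (Finset.subset_empty.1 hs),
    Finset.sum_empty]

/-- Min-cut characterization of the optimal density. With cut cost
`c(W) = ∑_{i : ¬(vtx i ⊆ W)} w i + ζ|W|` and `ρ* = max{ρ(W) : ∅ ≠ W ⊆ V}`: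
if a nonempty `W'` minimizes `c` then `ζ ≤ ρ(W') ≤ ρ*`; if `∅` minimizes `c` then `ζ ≥ ρ*`. -/
theorem stmt11
    (k : ℕ) (hk : 2 ≤ k)
    (V : Finset α) (I : Finset ι) (vtx : ι → Finset α) (w : ι → ℝ)
    (hvtx : ∀ i ∈ I, vtx i ⊆ V) (hcard : ∀ i ∈ I, (vtx i).card = k)
    (hw : ∀ i ∈ I, 0 ≤ w i)
    (hV : V.Nonempty)
    (ζ : ℝ) (hζ : 0 ≤ ζ)
    (ρstar : ℝ)
    (hub : ∀ W ⊆ V, W.Nonempty → rhoW I vtx w W ≤ ρstar)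
    (hach : ∃ W ⊆ V, W.Nonempty ∧ rhoW I vtx w W = ρstar) :
    (∀ W' ⊆ V, W'.Nonempty →
      (∀ W ⊆ V,
        (∑ i ∈ I.filter (fun i => ¬ vtx i ⊆ W'), w i) + ζ * (W'.card : ℝ)
          ≤ (∑ i ∈ I.filter (fun i => ¬ vtx i ⊆ W), w i) + ζ * (W.card : ℝ)) →
      ζ ≤ rhoW I vtx w W' ∧ rhoW I vtx w W' ≤ ρstar) ∧
    ((∀ W ⊆ V,
        (∑ i ∈ I.filter (fun i => ¬ vtx i ⊆ (∅ : Finset α)), w i)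
            + ζ * ((∅ : Finset α).card : ℝ)
          ≤ (∑ i ∈ I.filter (fun i => ¬ vtx i ⊆ W), w i) + ζ * (W.card : ℝ)) →
      ρstar ≤ ζ) := by
  have h0 : tauW I vtx w ∅ = 0 :=
    tauW_empty I vtx w fun i hi => Finset.card_pos.1 (by have := hcard i hi; omega)
  have e0 := cut_add_tauW I vtx w ∅
  refine ⟨fun W' hW' hne hmin => ⟨?_, hub W' hW' hne⟩, fun hmin => ?_⟩
  · have hpos : (0 : ℝ) < W'.card := by exact_mod_cast hne.card_pos
    have h := hmin ∅ (Finset.empty_subset V)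
    have e := cut_add_tauW I vtx w W'
    rw [rhoW, le_div_iff₀ hpos]
    rw [Finset.card_empty, Nat.cast_zero, mul_zero] at h
    linarith
  · obtain ⟨W, hWV, hne, rfl⟩ := hach
    have hpos : (0 : ℝ) < W.card := by exact_mod_cast hne.card_pos
    have h := hmin W hWV
    have e := cut_add_tauW I vtx w W
    rw [rhoW, div_le_iff₀ hpos]
    rw [Finset.card_empty, Nat.cast_zero, mul_zero] at h
    linarith
end
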